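/- Let d be a positive integer and let f be a zero-sum free multiset over ℤ_d. Then the cardinality of f (counting multiplicity) is at most d − 1. -/

import Mathlib

/-- A multiset over `ZMod d` is zero-sum free if no nonempty submultiset sums to `0`. -/
def ZeroSumFree {d : ℕ} (f : Multiset (ZMod d)) : Prop :=
  ∀ g : Multiset (ZMod d), g ≤ f → g ≠ 0 → g.sum ≠ 0

/-- A zero-sum free multiset over `ℤ_d` has cardinality (with multiplicity) at most `d - 1`. -/
theorem card_le_of_zeroSumFree (d : ℕ) (hd : 0 < d) (f : Multiset (ZMod d))
    (hf : ZeroSumFree f) :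
    Multiset.card f ≤ d - 1 := by
  by_contra hcon
  haveI : NeZero d := ⟨hd.ne'⟩
  induction f using Quotient.inductionOn with
  | h l =>
  have hlen : d ≤ l.length := by
    have : Multiset.card (Quotient.mk _ l : Multiset (ZMod d)) = l.length := rfl
    omega
  have key : ∀ i j : ℕ, i < j → j ≤ l.length → (l.take i).sum ≠ (l.take j).sum := by
    intro i j hij hj h
    have hsub : (((l.take j).drop i : List (ZMod d)) : Multiset (ZMod d)) ≤ (l : Multiset (ZMod d)) :=
      Multiset.coe_le.mpr (((List.drop_sublist i _).trans (List.take_sublist j l)).subperm)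
    refine hf _ hsub ?_ ?_
    · intro h0
      have := congrArg Multiset.card h0
      simp at this
      omega
    · have h2 := List.sum_take_add_sum_drop (l.take j) i
      rw [List.take_take, min_eq_left hij.le, h] at h2
      simpa using h2
  obtain ⟨a, b, hab, he⟩ := Fintype.exists_ne_map_eq_of_card_lt
    (fun i : Fin (d + 1) => (l.take i.1).sum) (by simp [ZMod.card])
  have hne : a.1 ≠ b.1 := fun h => hab (Fin.ext h)
  rcases lt_or_gt_of_ne hne with h | h
  · exact key _ _ h (by omega) he
  · exact key _ _ h (by omega) he.symm
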